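/- Let λ0, λ1 ∈ ℝ with λ0 > 0, λ1 > 0, λ0 + λ1 = 1, and ρ := Matrix.diagonal ![ (λ0 : ℂ), (λ1 : ℂ) ]. Let A1, A2 be Hermitian 2×2 complex matrices with trace 0, with SLDs L1, L2 relative to ρ, and let F be the QFIM. Writing u_i := (A_i 0 0).re and s_i := A_i 0 1, the determinant of F satisfies det F = (4/(λ0·λ1)) · Complex.normSq (u1 • s2 − u2 • s1) + 16 · ((s1 * star s2).im)². -/

import Mathlib

open Matrix

/-- The symmetric logarithmic derivative of `A` relative to `ρ = diagonal ![λ0, λ1]`,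
defined entrywise by `L μ ν = 2 ⬝ A μ ν / (λμ + λν)`. -/
noncomputable def sld (l0 l1 : ℝ) (A : Matrix (Fin 2) (Fin 2) ℂ) : Matrix (Fin 2) (Fin 2) ℂ :=
  Matrix.of fun μ ν => 2 * A μ ν / ((![l0, l1] μ + ![l0, l1] ν : ℝ) : ℂ)

/-- The quantum Fisher information matrix of the pair of parameter-derivatives `A1, A2`
at the state `ρ = diagonal ![λ0, λ1]`:
`F i j = Re ((1/2) · Tr[ρ (L_i L_j + L_j L_i)])` where `L_i` is the SLD of `A_i`. -/
noncomputable def qfim (l0 l1 : ℝ) (A1 A2 : Matrix (Fin 2) (Fin 2) ℂ) :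
    Matrix (Fin 2) (Fin 2) ℝ :=
  Matrix.of fun i j =>
    ((1 / 2 : ℂ) * Matrix.trace (Matrix.diagonal ![(l0 : ℂ), (l1 : ℂ)] *
      (![sld l0 l1 A1, sld l0 l1 A2] i * ![sld l0 l1 A1, sld l0 l1 A2] j
        + ![sld l0 l1 A1, sld l0 l1 A2] j * ![sld l0 l1 A1, sld l0 l1 A2] i))).re

/-! The factor `(λμ + λν) / 2` produced by the anticommutator cancels one of the two denominators
of the SLDs, so `F i j = ∑ μ ν, 2 Re (Aᵢ μ ν * Aⱼ ν μ) / (λμ + λν)`. For Hermitian `A₁, A₂` this is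
the Gram matrix of two vectors in a weighted `ℝ × ℝ × ℂ` (diagonal entries and off-diagonal entry),
and its determinant is the sum of their squared weighted `2 × 2` minors. The trace condition makes
the two diagonal coordinates opposite: their mutual minor vanishes, and their minors against the
off-diagonal entry agree up to sign. -/

section TraceDiagonal

variable {n R : Type*} [Fintype n] [DecidableEq n]

theorem trace_diagonal_mul_mul [NonUnitalSemiring R] (w : n → R) (X Y : Matrix n n R) :
    (diagonal w * (X * Y)).trace = ∑ μ, ∑ ν, w μ * (X μ ν * Y ν μ) := by
  simp only [trace, diag_apply, diagonal_mul, mul_apply (M := X), Finset.mul_sum]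

theorem trace_diagonal_mul_anticommutator [NonUnitalCommSemiring R] (w : n → R)
    (X Y : Matrix n n R) :
    (diagonal w * (X * Y + Y * X)).trace = ∑ μ, ∑ ν, (w μ + w ν) * (X μ ν * Y ν μ) := by
  rw [mul_add, trace_add, trace_diagonal_mul_mul, trace_diagonal_mul_mul,
    Finset.sum_comm (f := fun μ ν => w μ * (Y μ ν * X ν μ))]
  simp only [← Finset.sum_add_distrib, add_mul, mul_comm (Y _ _)]

end TraceDiagonal

theorem qfim_apply_eq_sum (l0 l1 : ℝ) (A1 A2 : Matrix (Fin 2) (Fin 2) ℂ) (i j : Fin 2) :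
    qfim l0 l1 A1 A2 i j =
      ∑ μ, ∑ ν, 2 * (![A1, A2] i μ ν * ![A1, A2] j ν μ).re / (![l0, l1] μ + ![l0, l1] ν) := by
  have sld_vec (k : Fin 2) : ![sld l0 l1 A1, sld l0 l1 A2] k = sld l0 l1 (![A1, A2] k) := by
    fin_cases k <;> rfl
  have eigenvalues_cast : ![(l0 : ℂ), (l1 : ℂ)] = fun μ => ((![l0, l1] μ : ℝ) : ℂ) := by
    ext μ; fin_cases μ <;> rfl
  have cancel_weight (c : ℝ) (z w : ℂ) :
      1 / 2 * ((c : ℂ) * (2 * z / c * (2 * w / c))) = ((2 / c : ℝ) : ℂ) * (z * w) := by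
    rcases eq_or_ne c 0 with rfl | hc
    · simp
    · have : (c : ℂ) ≠ 0 := Complex.ofReal_ne_zero.mpr hc
      push_cast
      field_simp
  simp only [qfim, of_apply, sld_vec, eigenvalues_cast, trace_diagonal_mul_anticommutator,
    Finset.mul_sum, Complex.re_sum]
  refine Finset.sum_congr rfl fun μ _ => Finset.sum_congr rfl fun ν _ => ?_
  rw [sld, sld, of_apply, of_apply, add_comm (![l0, l1] ν), ← Complex.ofReal_add, cancel_weight,
    Complex.re_ofReal_mul, div_mul_eq_mul_div]

theorem qfim_eq_of_isHermitian (l0 l1 : ℝ) {A1 A2 : Matrix (Fin 2) (Fin 2) ℂ}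
    (hA1 : A1.IsHermitian) (hA2 : A2.IsHermitian) :
    qfim l0 l1 A1 A2 = of fun i j =>
      l0⁻¹ * (![A1, A2] i 0 0).re * (![A1, A2] j 0 0).re
        + l1⁻¹ * (![A1, A2] i 1 1).re * (![A1, A2] j 1 1).re
        + 4 / (l0 + l1) * (![A1, A2] i 0 1 * star (![A1, A2] j 0 1)).re := by
  have hA (k : Fin 2) : (![A1, A2] k).IsHermitian := by
    fin_cases k
    exacts [hA1, hA2]
  have diag_im (k μ : Fin 2) : (![A1, A2] k μ μ).im = 0 := by
    rw [← (hA k).coe_re_apply_self μ]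
    exact Complex.ofReal_im _
  have conj_off_diag (k : Fin 2) : ![A1, A2] k 1 0 = star (![A1, A2] k 0 1) :=
    ((hA k).apply 1 0).symm
  ext i j
  rw [qfim_apply_eq_sum]
  simp only [of_apply, Fin.sum_univ_two, conj_off_diag, Complex.mul_re, diag_im, cons_val_zero,
    cons_val_one, Complex.star_def, Complex.conj_re, Complex.conj_im, ← two_mul, add_comm l1]
  ring

/-- Cauchy–Binet for the two vectors `(aᵢ, bᵢ, sᵢ)` of a weighted `ℝ × ℝ × ℂ`. -/
theorem det_weighted_gram_real_real_complex (x y z : ℝ) (a b : Fin 2 → ℝ) (s : Fin 2 → ℂ) :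
    (of fun i j => x * a i * a j + y * b i * b j + z * (s i * star (s j)).re).det =
      x * y * (a 0 * b 1 - a 1 * b 0) ^ 2
        + z * (x * Complex.normSq (a 0 • s 1 - a 1 • s 0)
          + y * Complex.normSq (b 0 • s 1 - b 1 • s 0))
        + z ^ 2 * (s 0 * star (s 1)).im ^ 2 := by
  simp only [det_fin_two, of_apply, Complex.normSq_apply, Complex.mul_re, Complex.mul_im,
    Complex.star_def, Complex.conj_re, Complex.conj_im, Complex.sub_re, Complex.sub_im,
    Complex.real_smul, Complex.ofReal_re, Complex.ofReal_im]
  ring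

theorem apply_one_one_eq_neg_of_trace_eq_zero {R : Type*} [AddCommGroup R]
    {A : Matrix (Fin 2) (Fin 2) R} (htr : A.trace = 0) : A 1 1 = -A 0 0 :=
  eq_neg_of_add_eq_zero_right (by rwa [trace_fin_two] at htr)

theorem stmt_8_general {l0 l1 : ℝ} (hl0 : 0 < l0) (hl1 : 0 < l1)
    {A1 A2 : Matrix (Fin 2) (Fin 2) ℂ} (hA1 : A1.IsHermitian) (hA2 : A2.IsHermitian) :
    (qfim l0 l1 A1 A2).det =
      1 / (l0 * l1) * ((A1 0 0).re * (A2 1 1).re - (A2 0 0).re * (A1 1 1).re) ^ 2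
        + 4 / (l0 * l1 * (l0 + l1)) *
          (l1 * Complex.normSq ((A1 0 0).re • A2 0 1 - (A2 0 0).re • A1 0 1)
            + l0 * Complex.normSq ((A1 1 1).re • A2 0 1 - (A2 1 1).re • A1 0 1))
        + 16 / (l0 + l1) ^ 2 * (A1 0 1 * star (A2 0 1)).im ^ 2 := by
  rw [qfim_eq_of_isHermitian l0 l1 hA1 hA2,
    det_weighted_gram_real_real_complex (s := fun k => ![A1, A2] k 0 1)]
  simp only [cons_val_zero, cons_val_one]
  field_simp
  ring

theorem stmt_8 (l0 l1 : ℝ) (hl0 : 0 < l0) (hl1 : 0 < l1) (hsum : l0 + l1 = 1)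
    (A1 A2 : Matrix (Fin 2) (Fin 2) ℂ)
    (hA1 : A1.IsHermitian) (hA2 : A2.IsHermitian)
    (hA1tr : A1.trace = 0) (hA2tr : A2.trace = 0)
    (u1 u2 : ℝ) (s1 s2 : ℂ)
    (hu1 : u1 = (A1 0 0).re) (hu2 : u2 = (A2 0 0).re)
    (hs1 : s1 = A1 0 1) (hs2 : s2 = A2 0 1) :
    (qfim l0 l1 A1 A2).det
      = (4 / (l0 * l1)) * Complex.normSq (u1 • s2 - u2 • s1)
        + 16 * ((s1 * star s2).im) ^ 2 := by
  subst hu1 hu2 hs1 hs2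
  rw [stmt_8_general hl0 hl1 hA1 hA2, apply_one_one_eq_neg_of_trace_eq_zero hA1tr,
    apply_one_one_eq_neg_of_trace_eq_zero hA2tr, Complex.neg_re, Complex.neg_re, neg_smul,
    neg_smul, ← neg_sub', Complex.normSq_neg, ← add_mul, add_comm l1, hsum]
  ring
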